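/- Define Ω̃_{0,5}(X,Y)(f) = 2X^(5)Y′f′ + 5X′Y^(4)f″ + 10X‴Y′f‴ + 5X″Y′f^(4) − (the same expression with X and Y exchanged). Then Ω̃_{0,5} = −[[C_{5,5}, C_{0,5}]] (with C_{5,5}(X)(f) = X′f valued in D_{5,5} and C_{0,5}(X)(f) = 2X^(5)f′ − 5X^(4)f″ + 10X‴f‴ + 5X″f^(4) valued in D_{0,5}), and Ω̃_{0,5} is a 2-cocycle on Vect(1) with values in D_{0,5}. -/

import Mathlib

noncomputable section

/-- Polynomials over ℝ, identified with polynomial vector fields / densities on the line. -/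
abbrev P : Type := Polynomial ℝ

/-- Derivative d/dx. -/
def D : P → P := fun f => Polynomial.derivative f

/-- Iterated derivative: `Dk k f = f^(k)`. -/
def Dk (k : ℕ) : P → P := D^[k]

/-- Lie bracket on Vect(1): [X,Y] = XY' - X'Y. -/
def br (X Y : P) : P := X * D Y - D X * Y

/-- Action of the vector field X on λ-densities: `L_X^λ f = X f' + λ X' f`. -/
def Lw (l : ℝ) (X f : P) : P := X * D f + Polynomial.C l * D X * f

/-- Action on operators from F_ν to F_μ: `L_X^{ν,μ}(A) = L_X^μ ∘ A - A ∘ L_X^ν`. -/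
def LD (nu mu : ℝ) (X : P) (A : P → P) (f : P) : P := Lw mu X (A f) - A (Lw nu X f)

/-- 1-cocycle condition with values in D_{ν,μ}. -/
def IsCocycle1 (nu mu : ℝ) (c : P → P → P) : Prop :=
  ∀ X Y f, c (br X Y) f = LD nu mu X (c Y) f - LD nu mu Y (c X) f

/-- 2-cocycle condition with values in D_{ν,μ}. -/
def IsCocycle2 (nu mu : ℝ) (o : P → P → P → P) : Prop :=
  ∀ X Y Z f,
    LD nu mu X (o Y Z) f - LD nu mu Y (o X Z) f + LD nu mu Z (o X Y) f
      - o (br X Y) Z f + o (br X Z) Y f - o (br Y Z) X f = 0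

/-- Cup product of 1-cochains: `[[C₁,C₂]](X,Y) = C₁(X)∘C₂(Y) - C₁(Y)∘C₂(X)`. -/
def cup (c₁ c₂ : P → P → P) (X Y f : P) : P := c₁ X (c₂ Y f) - c₁ Y (c₂ X f)

/-- Coboundary of a 1-cochain b with values in D_{ν,μ}. -/
def cob (nu mu : ℝ) (b : P → P → P) (X Y f : P) : P :=
  LD nu mu X (b Y) f - LD nu mu Y (b X) f - b (br X Y) f


/-- Half of the 2-cocycle `Ω̃_{0,5}`. -/
def term13 (X Y f : P) : P :=
  2 * Dk 5 X * D Y * D f + 5 * D X * Dk 4 Y * Dk 2 f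
    + 10 * Dk 3 X * D Y * Dk 3 f + 5 * Dk 2 X * D Y * Dk 4 f

theorem D_add' (f g : P) : D (f + g) = D f + D g := by simp [D]
theorem D_sub' (f g : P) : D (f - g) = D f - D g := by simp [D]
theorem D_mul' (f g : P) : D (f * g) = D f * g + f * D g := by simp [D]
theorem D_two' : D 2 = 0 := by
  show Polynomial.derivative (2 : Polynomial ℝ) = 0
  exact Polynomial.derivative_ofNat 2
theorem D_five' : D 5 = 0 := by
  show Polynomial.derivative (5 : Polynomial ℝ) = 0
  exact Polynomial.derivative_ofNat 5
theorem D_ten' : D 10 = 0 := by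
  show Polynomial.derivative (10 : Polynomial ℝ) = 0
  exact Polynomial.derivative_ofNat 10
theorem C_five' : (Polynomial.C (5 : ℝ) : P) = 5 := rfl

set_option maxHeartbeats 4000000 in
/-- `Ω̃_{0,5} = -[[C_{5,5},C_{0,5}]]` is a 2-cocycle with values
in `D_{0,5}`. -/
theorem Om05tilde_two_cocycle :
    (∀ X Y f : P, term13 X Y f - term13 Y X f =
      - cup (fun X f => D X * f)
          (fun X f => 2 * Dk 5 X * D f - 5 * Dk 4 X * Dk 2 f
            + 10 * Dk 3 X * Dk 3 f + 5 * Dk 2 X * Dk 4 f) X Y f) ∧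
    IsCocycle2 0 5 (fun X Y f => term13 X Y f - term13 Y X f) := by
  constructor
  · intro X Y f
    simp only [term13, cup]
    ring
  · intro X Y Z f
    simp only [term13, LD, Lw, br, Dk, Function.iterate_succ_apply',
      Function.iterate_zero, id, Polynomial.C_0, C_five', zero_mul, add_zero,
      D_add', D_sub', D_mul', D_two', D_five', D_ten', zero_add]
    ring
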